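/- Let n ≥ 3 be odd, let T be a regular tournament on n vertices, let x be a vertex of T, and let Q be a finite set of unordered pairs of distinct vertices. If in every tournament T' on the same vertex set that agrees with T on Q the vertex x is a vertex of maximum out-degree, then |Q| ≥ (n−1)²/2. -/

import Mathlib

/-- A tournament: irreflexive, and for distinct vertices exactly one orientation holds. -/
def IsTournament {V : Type*} (r : V → V → Prop) : Prop :=
  (∀ x, ¬ r x x) ∧ ∀ x y : V, x ≠ y → (r x y ↔ ¬ r y x)

open Classical in
/-- Out-degree of a vertex: number of `y` with `r x y`. -/
noncomputable def outDeg {V : Type*} [Fintype V] (r : V → V → Prop) (x : V) : ℕ :=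
  (Finset.univ.filter fun y => r x y).card

open Classical in
/-- In-degree of a vertex: number of `y` with `r y x`. -/
noncomputable def inDeg {V : Type*} [Fintype V] (r : V → V → Prop) (x : V) : ℕ :=
  (Finset.univ.filter fun y => r y x).card

/-- A king: reaches every other vertex by a path of length at most 2. -/
def IsKing {V : Type*} (r : V → V → Prop) (x : V) : Prop :=
  ∀ y : V, y ≠ x → r x y ∨ ∃ z, r x z ∧ r z y

/-- A vertex of maximum out-degree. -/
def IsMOD {V : Type*} [Fintype V] (r : V → V → Prop) (x : V) : Prop :=
  ∀ y : V, outDeg r y ≤ outDeg r x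

/-- `r'` agrees with `r` on the set `Q` of unordered pairs. -/
def AgreesOn {V : Type*} (r r' : V → V → Prop) (Q : Set (Sym2 V)) : Prop :=
  ∀ y z : V, s(y, z) ∈ Q → (r' y z ↔ r y z)

/-!
In a certificate for `x`, every arc `a → b` with `b ≠ x` and `d⁺(b) ≥ d⁺(x)` must be queried:
reversing an unqueried one would raise `d⁺(b)` by one without raising `d⁺(x)`. In a regular
tournament on `n = 2k + 1` vertices this applies to all `k` arcs into each of the `2k` vertices
other than `x`, and distinct arcs are distinct pairs, so at least `2k²` pairs are queried.
-/

open Finset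

section Certificate

variable {V : Type*} {r : V → V → Prop}

theorem IsTournament.asymm (hT : IsTournament r) {a b : V} (hab : r a b) : ¬ r b a := by
  have hne : a ≠ b := by
    rintro rfl
    exact hT.1 a hab
  exact (hT.2 a b hne).1 hab

open Classical in
/-- The relation obtained from `r` by reversing the arc on the unordered pair `p`. -/
def reversePair (r : V → V → Prop) (p : Sym2 V) (y z : V) : Prop :=
  if s(y, z) = p then r z y else r y z

theorem isTournament_reversePair (hT : IsTournament r) (p : Sym2 V) :
    IsTournament (reversePair r p) := by
  refine ⟨fun y => ?_, fun y z hyz => ?_⟩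
  · simpa only [reversePair, ite_self] using hT.1 y
  · rw [reversePair, reversePair, Sym2.eq_swap (a := z)]
    split_ifs
    · exact hT.2 z y hyz.symm
    · exact hT.2 y z hyz

theorem agreesOn_reversePair {p : Sym2 V} {Q : Set (Sym2 V)} (hp : p ∉ Q) :
    AgreesOn r (reversePair r p) Q := by
  intro y z hyz
  rw [reversePair, if_neg (ne_of_mem_of_not_mem hyz hp)]

variable [Fintype V] {a b x : V}

/-- `Q` is a certificate for `x` being a vertex of maximum out-degree: the answers of `r` to the
queries in `Q` prove it, whatever the orientation of the remaining pairs. -/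
def IsMODCertificate (r : V → V → Prop) (x : V) (Q : Set (Sym2 V)) : Prop :=
  ∀ r' : V → V → Prop, IsTournament r' → AgreesOn r r' Q → IsMOD r' x

theorem IsTournament.outDeg_add_inDeg_add_one (hT : IsTournament r) (y : V) :
    outDeg r y + inDeg r y + 1 = Fintype.card V := by
  classical
  have not_out : univ.filter (fun z => ¬ r y z) = insert y (univ.filter fun z => r z y) := by
    ext z
    have := hT.1 y
    have := hT.2 y z
    grind
  have card_not_out : inDeg r y + 1 = #{z | ¬ r y z} := by
    rw [not_out, card_insert_of_notMem (by simpa using hT.1 y), inDeg]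
  calc outDeg r y + inDeg r y + 1
    _ = #{z | r y z} + #{z | ¬ r y z} := by
      rw [add_assoc, card_not_out, outDeg]
    _ = Fintype.card V := card_filter_add_card_filter_not _

theorem outDeg_reversePair_le (hab : r a b) (hxb : x ≠ b) :
    outDeg (reversePair r s(a, b)) x ≤ outDeg r x := by
  classical
  refine card_le_card (monotone_filter_right univ fun z _ hxz => ?_)
  grind [reversePair]

theorem outDeg_reversePair_right (hab : r a b) (hba : ¬ r b a) :
    outDeg (reversePair r s(a, b)) b = outDeg r b + 1 := by
  classical
  rw [outDeg, outDeg, ← card_insert_of_notMem (a := a) (by simpa using hba)]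
  congr 1
  ext z
  grind [reversePair]

theorem IsMODCertificate.mem_of_arc {Q : Set (Sym2 V)} (hQ : IsMODCertificate r x Q)
    (hT : IsTournament r) (hab : r a b) (hbx : b ≠ x) (hdeg : outDeg r x ≤ outDeg r b) :
    s(a, b) ∈ Q := by
  by_contra hmem
  have hle : outDeg r b + 1 ≤ outDeg r x :=
    calc outDeg r b + 1
      _ = outDeg (reversePair r s(a, b)) b := (outDeg_reversePair_right hab (hT.asymm hab)).symm
      _ ≤ outDeg (reversePair r s(a, b)) x :=
        hQ _ (isTournament_reversePair hT _) (agreesOn_reversePair hmem) b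
      _ ≤ outDeg r x := outDeg_reversePair_le hab hbx.symm
  omega

theorem sum_inDeg_le_card_of_forall_mem (hasymm : ∀ ⦃a b⦄, r a b → ¬ r b a) {B : Finset V}
    {Q : Finset (Sym2 V)} (hQ : ∀ b ∈ B, ∀ a, r a b → s(a, b) ∈ Q) :
    ∑ b ∈ B, inDeg r b ≤ #Q := by
  classical
  simp only [inDeg]
  rw [← card_sigma]
  refine card_le_card_of_injOn (fun p => s(p.2, p.1)) ?_ ?_
  · rintro ⟨b, a⟩ hba
    simp only [coe_sigma, Set.mem_sigma_iff, mem_coe, mem_filter_univ] at hba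
    exact hQ b hba.1 a hba.2
  · rintro ⟨b, a⟩ hba ⟨b', a'⟩ hba' heq
    simp only [coe_sigma, Set.mem_sigma_iff, mem_coe, mem_filter_univ] at hba hba'
    rcases Sym2.eq_iff.1 heq with ⟨rfl, rfl⟩ | ⟨rfl, rfl⟩
    · rfl
    · exact absurd hba'.2 (hasymm hba.2)

theorem IsMODCertificate.sum_inDeg_le_card {Q : Finset (Sym2 V)} (hQ : IsMODCertificate r x ↑Q)
    (hT : IsTournament r) {B : Finset V} (hB : ∀ b ∈ B, b ≠ x ∧ outDeg r x ≤ outDeg r b) :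
    ∑ b ∈ B, inDeg r b ≤ #Q :=
  sum_inDeg_le_card_of_forall_mem (fun _ _ => hT.asymm) fun b hb _ hab =>
    hQ.mem_of_arc hT hab (hB b hb).1 (hB b hb).2

end Certificate

/-- odd regular case lower bound: if every tournament agreeing with `T`
on `Q` has `x` as a vertex of maximum out-degree, then `|Q| ≥ (n-1)²/2`. -/
theorem certificate_lower_bound_odd {V : Type*} [Fintype V] (r : V → V → Prop)
    (hT : IsTournament r) (hn : 3 ≤ Fintype.card V) (hodd : Odd (Fintype.card V))
    (hreg : ∀ y : V, outDeg r y = (Fintype.card V - 1) / 2)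
    (x : V) (Q : Finset (Sym2 V)) (hQ : ∀ p ∈ Q, ¬ p.IsDiag)
    (hcert : ∀ r' : V → V → Prop, IsTournament r' → AgreesOn r r' ↑Q → IsMOD r' x) :
    (Fintype.card V - 1) ^ 2 / 2 ≤ Q.card := by
  classical
  obtain ⟨k, hk⟩ := hodd
  have hout (y : V) : outDeg r y = k := by
    have := hreg y
    omega
  have hin (y : V) : inDeg r y = k := by
    have := hT.outDeg_add_inDeg_add_one y
    have := hout y
    omega
  have hQcert : IsMODCertificate r x ↑Q := hcert
  calc (Fintype.card V - 1) ^ 2 / 2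
    _ = 2 * k * k := by
      rw [hk, Nat.add_sub_cancel]
      exact Nat.div_eq_of_eq_mul_right two_pos (by ring)
    _ = ∑ b ∈ univ.erase x, inDeg r b := by simp [hin, hk]
    _ ≤ #Q := hQcert.sum_inDeg_le_card hT fun b hb =>
      ⟨ne_of_mem_erase hb, by rw [hout, hout]⟩
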